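/- Compactness of the weighted K₂ operator: for every β, γ > 0, the integral operator on L²(0,2π) with kernel a(p)^{−1/2} · K₂(p,q) · a(q)^{−1/2} is a well-defined bounded linear operator which is compact (indeed Hilbert–Schmidt, since its kernel is bounded by a constant times sin(p/2)^{−1/3} · sin(q/2)^{−1/3}). -/

import Mathlib

open MeasureTheory Real Set

noncomputable section

/-- The dispersion relation `ω(p) = |sin(p/2)|`. -/
def ω (p : ℝ) : ℝ := |Real.sin (p / 2)|

/-- Parameterization `h(x,z)` of the resonant manifold. -/
def resH (x z : ℝ) : ℝ :=
  (z - x) / 2 + 2 * Real.arcsin (Real.tan (|z - x| / 4) * Real.cos ((x + z) / 4))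

/-- `F₊(x,z) = (cos(x/2)+cos(z/2))² + 4 sin(x/2) sin(z/2)`. -/
def Fplus (x z : ℝ) : ℝ :=
  (Real.cos (x / 2) + Real.cos (z / 2)) ^ 2 + 4 * Real.sin (x / 2) * Real.sin (z / 2)

/-- `F₋(x,z) = (cos(x/2)+cos(z/2))² − 4 sin(x/2) sin(z/2)`. -/
def Fminus (x z : ℝ) : ℝ :=
  (Real.cos (x / 2) + Real.cos (z / 2)) ^ 2 - 4 * Real.sin (x / 2) * Real.sin (z / 2)

/-- The Rayleigh–Jeans equilibrium `𝔣(p) = 1/(βω(p)+γ)`. -/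
def fRJ (β γ p : ℝ) : ℝ := 1 / (β * ω p + γ)

/-- The collision frequency `a(p)`, with `p₁ = h(p,p₂)` and `p₃ = p + p₁ − p₂`. -/
def afreq (β γ p : ℝ) : ℝ :=
  ω p / fRJ β γ p *
    ∫ q in (0:ℝ)..(2 * π),
      ω (resH p q) * ω q * ω (p + resH p q - q) *
        (fRJ β γ (resH p q) * fRJ β γ q * fRJ β γ (p + resH p q - q)) / Real.sqrt (Fplus p q)

/-- The kernel `K₂(p,q)`, with `p₁ = h(p,q)` and `p₃ = p + p₁ − q`. -/
def K2 (β γ p q : ℝ) : ℝ :=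
  ω p * ω (resH p q) * ω q * ω (p + resH p q - q) *
    (fRJ β γ (resH p q) * fRJ β γ (p + resH p q - q)) / Real.sqrt (Fplus p q)

/-- `p₂ = (p+q)/2 + 2 arcsin(tan((p+q)/4) cos((p−q)/4))`, as used in the kernel `K₁`. -/
def p2aux (p q : ℝ) : ℝ :=
  (p + q) / 2 + 2 * Real.arcsin (Real.tan ((p + q) / 4) * Real.cos ((p - q) / 4))

/-- The kernel `K₁(p,q)`, with `p₂ = p2aux p q` and `p₃ = p + q − p₂`. -/
def K1 (β γ p q : ℝ) : ℝ :=
  if 0 < Fminus p q then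
    ω p * ω q * ω (p2aux p q) * ω (p + q - p2aux p q) *
      (fRJ β γ (p2aux p q) * fRJ β γ (p + q - p2aux p q)) / Real.sqrt (Fminus p q)
  else 0

/-- The linearized operator `L`, acting pointwise on functions. -/
def Lfun (β γ : ℝ) (g : ℝ → ℝ) (p : ℝ) : ℝ :=
  -(afreq β γ p * g p) - (∫ q in (0:ℝ)..(2 * π), K1 β γ p q * g q)
    + 2 * ∫ q in (0:ℝ)..(2 * π), K2 β γ p q * g q

/-- The measure on the fundamental domain `(0,2π)`. -/
def μ2π : Measure ℝ := volume.restrict (Set.Ioo 0 (2 * π))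

section HS

set_option linter.unusedSectionVars false

variable {α : Type*} [MeasurableSpace α] {μ : Measure α} [IsFiniteMeasure μ]

/-- `T` is the integral operator with kernel `k`. -/
def HasKer (μ : Measure α) (T : Lp ℝ 2 μ →L[ℝ] Lp ℝ 2 μ) (k : α × α → ℝ) : Prop :=
  ∀ g : Lp ℝ 2 μ, (T g : α → ℝ) =ᵐ[μ] fun p => ∫ q, k (p, q) * g q ∂μ

lemma ker_section_memLp {k : α × α → ℝ} (hk : MemLp k 2 (μ.prod μ)) :
    ∀ᵐ p ∂μ, MemLp (fun q => k (p, q)) 2 μ := by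
  have h1 : Integrable (fun z => k z ^ 2) (μ.prod μ) := hk.integrable_sq
  have h2 := h1.prod_right_ae
  have h3 := hk.aestronglyMeasurable.prodMk_left
  filter_upwards [h2, h3] with p hp hm
  exact (memLp_two_iff_integrable_sq hm).2 hp

lemma ker_section_integrable {k : α × α → ℝ} (hk : MemLp k 2 (μ.prod μ)) (g : Lp ℝ 2 μ) :
    ∀ᵐ p ∂μ, Integrable (fun q => k (p, q) * g q) μ := by
  filter_upwards [ker_section_memLp hk] with p hp
  exact hp.integrable_mul (Lp.memLp g)

lemma ker_integral_aesm {k : α × α → ℝ} (hk : MemLp k 2 (μ.prod μ)) (g : Lp ℝ 2 μ) :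
    AEStronglyMeasurable (fun p => ∫ q, k (p, q) * g q ∂μ) μ := by
  have : AEStronglyMeasurable (fun z : α × α => k z * g z.2) (μ.prod μ) :=
    hk.aestronglyMeasurable.mul (Lp.aestronglyMeasurable g).comp_snd
  exact this.integral_prod_right'

lemma eLpNorm_two_sq {β : Type*} [MeasurableSpace β] (ν : Measure β) (f : β → ℝ) :
    eLpNorm f 2 ν = (∫⁻ x, ‖f x‖ₑ ^ (2:ℝ) ∂ν) ^ (1 / (2:ℝ)) := by
  rw [eLpNorm_eq_lintegral_rpow_enorm_toReal (by norm_num) (by norm_num)]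
  norm_num

lemma ker_eLpNorm_le {k : α × α → ℝ} (hk : MemLp k 2 (μ.prod μ)) (g : Lp ℝ 2 μ) :
    eLpNorm (fun p => ∫ q, k (p, q) * g q ∂μ) 2 μ ≤ eLpNorm k 2 (μ.prod μ) * eLpNorm g 2 μ := by
  have key : ∀ᵐ p ∂μ, ‖∫ q, k (p, q) * g q ∂μ‖ₑ ^ (2:ℝ) ≤
      (∫⁻ q, ‖k (p, q)‖ₑ ^ (2:ℝ) ∂μ) * (∫⁻ q, ‖g q‖ₑ ^ (2:ℝ) ∂μ) := by
    filter_upwards [hk.aestronglyMeasurable.prodMk_left] with p hp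
    have h1 : ‖∫ q, k (p, q) * g q ∂μ‖ₑ ≤
        (∫⁻ q, ‖k (p, q)‖ₑ ^ (2:ℝ) ∂μ) ^ (1 / (2:ℝ)) * (∫⁻ q, ‖g q‖ₑ ^ (2:ℝ) ∂μ) ^ (1 / (2:ℝ)) := by
      refine (enorm_integral_le_lintegral_enorm _).trans ?_
      have := ENNReal.lintegral_mul_le_Lp_mul_Lq μ (p := 2) (q := 2)
        (by constructor <;> norm_num) hp.enorm (Lp.aestronglyMeasurable g).enorm
      simpa [enorm_mul] using this
    calc _ ≤ _ := ENNReal.rpow_le_rpow h1 (by norm_num : (0:ℝ) ≤ 2)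
      _ = _ := by
        rw [ENNReal.mul_rpow_of_nonneg _ _ (by norm_num), ← ENNReal.rpow_mul, ← ENNReal.rpow_mul]
        norm_num
  rw [eLpNorm_two_sq, eLpNorm_two_sq, eLpNorm_two_sq,
    ← ENNReal.mul_rpow_of_nonneg _ _ (by norm_num)]
  refine ENNReal.rpow_le_rpow ?_ (by norm_num)
  refine (lintegral_mono_ae key).trans ?_
  have hm : AEMeasurable (fun z : α × α => ‖k z‖ₑ ^ (2:ℝ)) (μ.prod μ) :=
    hk.aestronglyMeasurable.enorm.pow_const _
  rw [lintegral_prod _ hm, lintegral_mul_const'']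
  exact hm.lintegral_prod_right'

lemma exists_hasKer {k : α × α → ℝ} (hk : MemLp k 2 (μ.prod μ)) :
    ∃ T : Lp ℝ 2 μ →L[ℝ] Lp ℝ 2 μ, HasKer μ T k ∧ ‖T‖ ≤ (eLpNorm k 2 (μ.prod μ)).toReal := by
  have hmem : ∀ g : Lp ℝ 2 μ, MemLp (fun p => ∫ q, k (p, q) * g q ∂μ) 2 μ := fun g =>
    ⟨ker_integral_aesm hk g, (ker_eLpNorm_le hk g).trans_lt
      (ENNReal.mul_lt_top hk.2 (Lp.memLp g).2)⟩
  let L : Lp ℝ 2 μ →ₗ[ℝ] Lp ℝ 2 μ :=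
    { toFun := fun g => (hmem g).toLp _
      map_add' := by
        intro f g
        apply Lp.ext
        filter_upwards [(hmem (f + g)).coeFn_toLp, (hmem f).coeFn_toLp, (hmem g).coeFn_toLp,
          Lp.coeFn_add ((hmem f).toLp _) ((hmem g).toLp _), ker_section_integrable hk f,
          ker_section_integrable hk g] with p h1 h2 h3 h4 h5 h6
        rw [h1, h4, Pi.add_apply, h2, h3, ← integral_add h5 h6]
        apply integral_congr_ae
        filter_upwards [Lp.coeFn_add f g] with q hq
        rw [hq, Pi.add_apply, mul_add]
      map_smul' := by
        intro c g
        apply Lp.ext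
        filter_upwards [(hmem (c • g)).coeFn_toLp, (hmem g).coeFn_toLp,
          Lp.coeFn_smul c ((hmem g).toLp _)] with p h1 h2 h4
        rw [h1, RingHom.id_apply, h4, Pi.smul_apply, h2, smul_eq_mul, ← integral_const_mul]
        apply integral_congr_ae
        filter_upwards [Lp.coeFn_smul c g] with q hq
        rw [hq, Pi.smul_apply, smul_eq_mul]; ring }
  refine ⟨L.mkContinuous (eLpNorm k 2 (μ.prod μ)).toReal ?_, ?_, ?_⟩
  · intro g
    change ‖(hmem g).toLp _‖ ≤ _
    rw [Lp.norm_toLp, Lp.norm_def, ← ENNReal.toReal_mul]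
    exact ENNReal.toReal_mono (ENNReal.mul_lt_top hk.2 (Lp.memLp g).2).ne (ker_eLpNorm_le hk g)
  · intro g
    exact (hmem g).coeFn_toLp
  · exact L.mkContinuous_norm_le ENNReal.toReal_nonneg _

lemma HasKer.unique {T T' : Lp ℝ 2 μ →L[ℝ] Lp ℝ 2 μ} {k : α × α → ℝ} (h : HasKer μ T k)
    (h' : HasKer μ T' k) : T = T' := by
  ext1 g
  exact Lp.ext ((h g).trans (h' g).symm)

lemma HasKer.add {T T' : Lp ℝ 2 μ →L[ℝ] Lp ℝ 2 μ} {k k' : α × α → ℝ}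
    (hk : MemLp k 2 (μ.prod μ)) (hk' : MemLp k' 2 (μ.prod μ)) (h : HasKer μ T k)
    (h' : HasKer μ T' k') : HasKer μ (T + T') (k + k') := by
  intro g
  filter_upwards [h g, h' g, Lp.coeFn_add (T g) (T' g), ker_section_integrable hk g,
    ker_section_integrable hk' g] with p h1 h2 h3 h4 h5
  rw [add_apply, h3, Pi.add_apply, h1, h2, ← integral_add h4 h5]
  simp only [Pi.add_apply, add_mul]

lemma HasKer.smul {T : Lp ℝ 2 μ →L[ℝ] Lp ℝ 2 μ} {k : α × α → ℝ} (c : ℝ)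
    (h : HasKer μ T k) : HasKer μ (c • T) (c • k) := by
  intro g
  filter_upwards [h g, Lp.coeFn_smul c (T g)] with p h1 h3
  rw [smul_apply, h3, Pi.smul_apply, h1, smul_eq_mul, ← integral_const_mul]
  simp only [Pi.smul_apply, smul_eq_mul, mul_assoc]

/-- The kernel is square integrable and its integral operator is compact. -/
def CompKer (μ : Measure α) (k : α × α → ℝ) : Prop :=
  MemLp k 2 (μ.prod μ) ∧ ∃ T : Lp ℝ 2 μ →L[ℝ] Lp ℝ 2 μ, HasKer μ T k ∧ IsCompactOperator T

lemma CompKer.add {k k' : α × α → ℝ} (h : CompKer μ k) (h' : CompKer μ k') :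
    CompKer μ (k + k') := by
  obtain ⟨hk, T, hT, hc⟩ := h
  obtain ⟨hk', T', hT', hc'⟩ := h'
  exact ⟨hk.add hk', T + T', hT.add hk hk' hT', hc.add hc'⟩

lemma CompKer.smul {k : α × α → ℝ} (c : ℝ) (h : CompKer μ k) : CompKer μ (c • k) := by
  obtain ⟨hk, T, hT, hc⟩ := h
  exact ⟨hk.const_smul c, c • T, hT.smul c, hc.smul c⟩

lemma CompKer.of_approx {k : α × α → ℝ} (hk : MemLp k 2 (μ.prod μ))
    (h : ∀ ε : ENNReal, ε ≠ 0 → ∃ k', CompKer μ k' ∧ eLpNorm (k - k') 2 (μ.prod μ) ≤ ε) :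
    CompKer μ k := by
  obtain ⟨T, hT, -⟩ := exists_hasKer hk
  refine ⟨hk, T, hT, ?_⟩
  have hcl : IsClosed {f : Lp ℝ 2 μ →L[ℝ] Lp ℝ 2 μ | IsCompactOperator f} :=
    isClosed_setOfPred_isCompactOperator
  change T ∈ {f : Lp ℝ 2 μ →L[ℝ] Lp ℝ 2 μ | IsCompactOperator f}
  rw [← hcl.closure_eq, Metric.mem_closure_iff]
  intro ε hε
  obtain ⟨k', ⟨hk', T', hT', hc'⟩, hle⟩ := h (ENNReal.ofReal (ε / 2)) (by simpa using hε)
  refine ⟨T', hc', ?_⟩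
  obtain ⟨D, hD, hDn⟩ := exists_hasKer (hk.sub hk')
  have e : T = D + T' := by
    refine hT.unique ?_
    have := hD.add (hk.sub hk') hk' hT'
    simpa using this
  have : T - T' = D := by rw [e]; abel
  rw [dist_eq_norm, this]
  have h2 : (eLpNorm (k - k') 2 (μ.prod μ)).toReal ≤ ε / 2 := by
    have := ENNReal.toReal_mono ENNReal.ofReal_ne_top hle
    rwa [ENNReal.toReal_ofReal (by positivity)] at this
  linarith

lemma memLp_ind {s : Set (α × α)} (hs : MeasurableSet s) :
    MemLp (s.indicator fun _ => (1:ℝ)) 2 (μ.prod μ) :=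
  memLp_indicator_const 2 hs 1 (Or.inr (measure_ne_top _ _))

lemma compKer_rect {A B : Set α} (hA : MeasurableSet A) (hB : MeasurableSet B) :
    CompKer μ ((A ×ˢ B).indicator fun _ => (1:ℝ)) := by
  refine ⟨memLp_ind (hA.prod hB), ?_⟩
  let v : Lp ℝ 2 μ := indicatorConstLp 2 hA (measure_ne_top μ A) (1:ℝ)
  let w : Lp ℝ 2 μ := indicatorConstLp 2 hB (measure_ne_top μ B) (1:ℝ)
  refine ⟨(ContinuousLinearMap.toSpanSingleton ℝ v).comp (innerSL ℝ w), ?_, ?_⟩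
  · intro g
    have e1 : ((ContinuousLinearMap.toSpanSingleton ℝ v).comp (innerSL ℝ w)) g
        = (∫ q in B, g q ∂μ) • v := by
      rw [← L2.inner_indicatorConstLp_one (𝕜 := ℝ) hB (measure_ne_top μ B) g]
      rfl
    rw [e1]
    filter_upwards [Lp.coeFn_smul (∫ q in B, g q ∂μ) v,
      indicatorConstLp_coeFn (p := 2) (hs := hA) (hμs := measure_ne_top μ A) (c := (1:ℝ))] with p h1 h2
    rw [h1, Pi.smul_apply, h2, ← integral_indicator hB, smul_eq_mul]
    by_cases hp : p ∈ A
    · simp only [hp, indicator_of_mem, mul_one]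
      congr 1; ext q
      by_cases hq : q ∈ B <;> simp [hp, hq, indicator]
    · simp [hp, indicator]
  · have : IsCompactOperator (ContinuousLinearMap.toSpanSingleton ℝ v) :=
      (isCompactOperator_id (E := ℝ)).clm_comp (ContinuousLinearMap.toSpanSingleton ℝ v)
    exact this.comp_clm (innerSL ℝ w)

lemma compKer_ind {s : Set (α × α)} (hs : MeasurableSet s) :
    CompKer μ (s.indicator fun _ => (1:ℝ)) := by
  induction s, hs using MeasurableSpace.induction_on_inter generateFrom_prod.symm isPiSystem_prod with
  | empty =>
    have := compKer_rect (μ := μ) (α := α) MeasurableSet.empty MeasurableSet.empty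
    rwa [Set.empty_prod] at this
  | basic t ht =>
    obtain ⟨A, hA, B, hB, rfl⟩ := ht
    exact compKer_rect hA hB
  | compl t ht h =>
    have h1 := (compKer_rect (μ := μ) (α := α) MeasurableSet.univ MeasurableSet.univ).add
      (h.smul (-1))
    convert h1 using 1
    ext z
    by_cases hz : z ∈ t <;> simp [hz]
  | iUnion f hd hf h =>
    refine CompKer.of_approx (memLp_ind (.iUnion hf)) ?_
    intro ε hε
    have ht := tendsto_measure_biUnion_Ici_zero_of_pairwise_disjoint (μ := μ.prod μ)
      (fun i => (hf i).nullMeasurableSet) hd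
    have hε2 : 0 < ε ^ (2:ℝ) := by
      rcases eq_or_ne ε ⊤ with h | h
      · simp [h]
      · exact ENNReal.rpow_pos (pos_iff_ne_zero.2 hε) h
    obtain ⟨n, hn⟩ := ((tendsto_order.1 ht).2 _ hε2).exists
    refine ⟨∑ i ∈ Finset.range n, (f i).indicator fun _ => (1:ℝ), ?_, ?_⟩
    · clear hn
      induction n with
      | zero =>
        have := compKer_rect (μ := μ) (α := α) MeasurableSet.empty MeasurableSet.empty
        rw [Set.empty_prod, Set.indicator_empty] at this
        rw [Finset.range_zero, Finset.sum_empty]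
        exact this
      | succ n ih => rw [Finset.sum_range_succ]; exact ih.add (h n)
    · have e : ((⋃ i, f i).indicator (fun _ => (1:ℝ)) -
          ∑ i ∈ Finset.range n, (f i).indicator fun _ => (1:ℝ)) =
          (⋃ i ≥ n, f i).indicator fun _ => (1:ℝ) := by
        ext z
        simp only [Pi.sub_apply, Finset.sum_apply]
        by_cases hz : ∃ j, z ∈ f j
        · obtain ⟨j, hj⟩ := hz
          have hu : ∀ i, z ∈ f i ↔ i = j := by
            intro i
            constructor
            · intro hi
              by_contra hne
              exact Set.disjoint_left.1 (hd hne) hi hj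
            · rintro rfl; exact hj
          have hU : z ∈ ⋃ i, f i := mem_iUnion.2 ⟨j, hj⟩
          have hV : (z ∈ ⋃ i ≥ n, f i) ↔ n ≤ j := by simp [hu]
          simp only [indicator, hu, hU, hV]
          by_cases hjn : j < n
          · have : ¬ n ≤ j := by omega
            simp [hjn, this]
          · have : n ≤ j := by omega
            simp [hjn, this]
        · push Not at hz
          simp [indicator, hz]
      rw [e, eLpNorm_indicator_const (by exact MeasurableSet.biUnion (Set.to_countable _) fun i _ => hf i)
        (by norm_num) (by norm_num)]
      have := ENNReal.rpow_le_rpow hn.le (z := 1 / 2) (by norm_num)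
      rw [← ENNReal.rpow_mul] at this
      simpa using this

theorem compKer_of_memLp {k : α × α → ℝ} (hk : MemLp k 2 (μ.prod μ)) : CompKer μ k := by
  refine CompKer.of_approx hk fun ε hε => ?_
  suffices H : ∃ g : α × α → ℝ, eLpNorm (k - g) 2 (μ.prod μ) ≤ ε ∧ CompKer μ g by
    obtain ⟨g, h1, h2⟩ := H
    exact ⟨g, h2, h1⟩
  refine hk.induction_dense (by norm_num) (CompKer μ) ?_ (fun f g => CompKer.add)
    (fun f h => h.1.1) hε
  · intro c s hs _ ε hε
    refine ⟨s.indicator fun _ => c, by simp, ?_⟩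
    convert (compKer_ind (μ := μ) hs).smul c using 1
    ext z
    by_cases hz : z ∈ s <;> simp [hz]

end HS

lemma ω_nonneg (p : ℝ) : 0 ≤ ω p := abs_nonneg _
lemma ω_le_one (p : ℝ) : ω p ≤ 1 := abs_sin_le_one _

lemma sin_half_pos {p : ℝ} (hp : p ∈ Ioo (0:ℝ) (2 * π)) : 0 < sin (p / 2) :=
  sin_pos_of_pos_of_lt_pi (by linarith [hp.1]) (by linarith [hp.2])

lemma ω_eq {p : ℝ} (hp : p ∈ Ioo (0:ℝ) (2 * π)) : ω p = sin (p / 2) :=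
  abs_of_pos (sin_half_pos hp)

lemma fRJ_pos {β γ : ℝ} (hβ : 0 < β) (hγ : 0 < γ) (p : ℝ) : 0 < fRJ β γ p := by
  have := ω_nonneg p
  unfold fRJ; positivity

lemma fRJ_le {β γ : ℝ} (hβ : 0 < β) (hγ : 0 < γ) (p : ℝ) : fRJ β γ p ≤ 1 / γ := by
  have := ω_nonneg p
  unfold fRJ
  exact one_div_le_one_div_of_le hγ (by nlinarith)

lemma le_fRJ {β γ : ℝ} (hβ : 0 < β) (hγ : 0 < γ) (p : ℝ) : 1 / (β + γ) ≤ fRJ β γ p := by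
  have := ω_nonneg p
  have h1 := ω_le_one p
  unfold fRJ
  exact one_div_le_one_div_of_le (by positivity) (by nlinarith)

/-- Resonance identity. -/
lemma omega_mul_omega {p q : ℝ} (hp : p ∈ Ioo (0:ℝ) (2 * π)) (hq : q ∈ Ioo (0:ℝ) (2 * π)) :
    ω (resH p q) * ω (p + resH p q - q) =
      tan ((q - p) / 4) ^ 2 * (sin (p / 2) * sin (q / 2)) := by
  obtain ⟨d, hd⟩ : ∃ d, d = (q - p) / 4 := ⟨_, rfl⟩
  obtain ⟨σ, hσ⟩ : ∃ σ, σ = (p + q) / 4 := ⟨_, rfl⟩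
  have hsp := sin_half_pos hp
  have hsq := sin_half_pos hq
  have hcd : 0 < cos d := by
    apply cos_pos_of_mem_Ioo
    constructor <;> linarith [hp.1, hp.2, hq.1, hq.2]
  have e1 : p / 2 = σ - d := by rw [hd, hσ]; ring
  have e2 : q / 2 = σ + d := by rw [hd, hσ]; ring
  obtain ⟨u, hu⟩ : ∃ u, u = tan (|q - p| / 4) * cos ((p + q) / 4) := ⟨_, rfl⟩
  have ht : tan (|q - p| / 4) ^ 2 = tan d ^ 2 := by
    rcases abs_choice (q - p) with h | h
    · rw [h, hd]
    · rw [h, neg_div, tan_neg, neg_sq, hd]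
  have hss : sin (p / 2) * sin (q / 2) = cos d ^ 2 - cos σ ^ 2 := by
    rw [e1, e2, sin_sub, sin_add]
    have h1 := sin_sq_add_cos_sq d
    have h2 := sin_sq_add_cos_sq σ
    linear_combination (cos d ^ 2 ) * h2 - cos σ ^ 2 * h1
  have hu2 : u ^ 2 = sin d ^ 2 - tan d ^ 2 * (sin (p / 2) * sin (q / 2)) := by
    rw [hu, mul_pow, ht, hss, ← hσ, tan_eq_sin_div_cos]
    field_simp
    ring
  have hpos : 0 ≤ tan d ^ 2 * (sin (p / 2) * sin (q / 2)) := by positivity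
  have hu1 : u ^ 2 ≤ 1 := by
    rw [hu2]; nlinarith [sin_sq_le_one d]
  have hA : sin (arcsin u) = u := by
    have := abs_le_one_iff_mul_self_le_one.2 (by nlinarith : u * u ≤ 1)
    exact sin_arcsin (abs_le.1 this).1 (abs_le.1 this).2
  have r1 : resH p q / 2 = arcsin u + d := by
    unfold resH; rw [← hu, hd]; ring
  have r2 : (p + resH p q - q) / 2 = arcsin u - d := by
    unfold resH; rw [← hu, hd]; ring
  unfold ω
  rw [r1, r2, ← abs_mul, ← hd]
  have : sin (arcsin u + d) * sin (arcsin u - d) = -(tan d ^ 2 * (sin (p / 2) * sin (q / 2))) := by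
    have h1 := sin_sq_add_cos_sq d
    have h2 := sin_sq_add_cos_sq (arcsin u)
    have : sin (arcsin u + d) * sin (arcsin u - d) = sin (arcsin u) ^ 2 - sin d ^ 2 := by
      rw [sin_sub, sin_add]
      linear_combination (sin (arcsin u) ^ 2) * h1 - sin d ^ 2 * h2
    rw [this, hA, hu2]; ring
  rw [this, abs_neg, abs_of_nonneg hpos]

lemma core_bound {p t r : ℝ} (hp0 : 0 < p) (hpπ : p ≤ π) (hr : 0 < r) (hr1 : r ≤ 1)
    (hr3 : r ^ 3 = sin (p / 2)) (ht : r ≤ t) (ht2 : t ≤ 2 * r) :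
    r / 19200 ≤ tan ((2 * π - t - p) / 4) ^ 2 * (sin (p / 2) * sin (t / 2)) * sin (t / 2) /
      sqrt ((cos (p / 2) - cos (t / 2)) ^ 2 + 4 * sin (p / 2) * sin (t / 2)) := by
  have hπ1 := pi_gt_three
  have hπ2 : π < 3.15 := pi_lt_d2
  have hrr : r ^ 3 ≤ r := by nlinarith [mul_pos hr hr]
  have hpr : p ≤ π * r := by
    have h := mul_le_sin (x := p / 2) (by linarith) (by linarith)
    rw [← hr3] at h
    have : 2 / π * (p / 2) = p / π := by ring
    rw [this] at h
    have := (div_le_iff₀ pi_pos).1 (h.trans hrr)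
    linarith
  obtain ⟨y, hy⟩ : ∃ y, y = (t + p) / 4 := ⟨_, rfl⟩
  have hy0 : 0 < y := by linarith
  have hyr : y ≤ 1.2875 * r := by nlinarith
  have hsy0 : 0 < sin y := sin_pos_of_pos_of_lt_pi hy0 (by linarith)
  have hsy : sin y ≤ 2 * r := (sin_le hy0.le).trans (by linarith)
  have hcy : 1 / 10 ≤ cos y := by
    have := one_sub_sq_div_two_le_cos (x := y)
    nlinarith
  have htan : tan ((2 * π - t - p) / 4) = cos y / sin y := by
    have : (2 * π - t - p) / 4 = π / 2 - y := by rw [hy]; ring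
    rw [this, tan_pi_div_two_sub, tan_eq_sin_div_cos, inv_div]
  have htan2 : 1 / (20 * r) ≤ tan ((2 * π - t - p) / 4) := by
    rw [htan, div_le_div_iff₀ (by positivity) hsy0]
    nlinarith
  have hst : r / 4 ≤ sin (t / 2) := by
    have h := mul_le_sin (x := t / 2) (by linarith) (by linarith)
    have : 2 / π * (t / 2) = t / π := by ring
    rw [this] at h
    refine le_trans ?_ h
    rw [div_le_div_iff₀ (by norm_num) pi_pos]
    nlinarith
  have hst2 : sin (t / 2) ≤ r := (sin_le (by linarith)).trans (by linarith)
  have hc1 : 1 - 2 * r ^ 2 ≤ cos (p / 2) := by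
    have := one_sub_sq_div_two_le_cos (x := p / 2)
    have : p ≤ 4 * r := by nlinarith
    nlinarith
  have hc2 : 1 - 2 * r ^ 2 ≤ cos (t / 2) := by
    have := one_sub_sq_div_two_le_cos (x := t / 2)
    nlinarith
  have hc3 := cos_le_one (p / 2)
  have hc4 := cos_le_one (t / 2)
  have hF : sqrt ((cos (p / 2) - cos (t / 2)) ^ 2 + 4 * sin (p / 2) * sin (t / 2)) ≤ 3 * r ^ 2 := by
    apply sqrt_le_iff.2 ⟨by positivity, ?_⟩
    have h1 : (cos (p / 2) - cos (t / 2)) ^ 2 ≤ (2 * r ^ 2) ^ 2 :=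
      sq_le_sq' (by linarith) (by linarith)
    have h2 : r ^ 3 * sin (t / 2) ≤ r ^ 3 * r := by gcongr
    rw [← hr3]
    nlinarith [pow_pos hr 4]
  have hFpos : 0 < sqrt ((cos (p / 2) - cos (t / 2)) ^ 2 + 4 * sin (p / 2) * sin (t / 2)) := by
    apply sqrt_pos.2
    have : 0 < r ^ 3 := by positivity
    rw [← hr3]
    have : 0 < sin (t / 2) := by linarith
    positivity
  rw [← hr3] at hF hFpos ⊢
  rw [le_div_iff₀ hFpos]
  calc r / 19200 * _ ≤ r / 19200 * (3 * r ^ 2) := by gcongr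
    _ = (1 / (20 * r)) ^ 2 * (r ^ 3 * (r / 4)) * (r / 4) := by field_simp; ring
    _ ≤ _ := by
        have : 0 < sin (t / 2) := by linarith
        have : 0 ≤ tan ((2 * π - t - p) / 4) ^ 2 * (r ^ 3 * sin (t / 2)) := by positivity
        gcongr

/-- integrand of `afreq` -/
def aInt (β γ p q : ℝ) : ℝ := ω (resH p q) * ω q * ω (p + resH p q - q) *
        (fRJ β γ (resH p q) * fRJ β γ q * fRJ β γ (p + resH p q - q)) / Real.sqrt (Fplus p q)

lemma aInt_nonneg {β γ : ℝ} (hβ : 0 < β) (hγ : 0 < γ) (p q : ℝ) : 0 ≤ aInt β γ p q := by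
  have h1 := fRJ_pos hβ hγ q
  have h2 := fRJ_pos hβ hγ (resH p q)
  have h3 := fRJ_pos hβ hγ (p + resH p q - q)
  have h4 := ω_nonneg q
  have h5 := ω_nonneg (resH p q)
  have h6 := ω_nonneg (p + resH p q - q)
  unfold aInt
  positivity

lemma aInt_ge {β γ : ℝ} (hβ : 0 < β) (hγ : 0 < γ) {p q m : ℝ} (hp : p ∈ Ioo (0:ℝ) (2 * π))
    (hq : q ∈ Ioo (0:ℝ) (2 * π))
    (hm : m ≤ tan ((q - p) / 4) ^ 2 * (sin (p / 2) * sin (q / 2)) * sin (q / 2) /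
      sqrt (Fplus p q)) (hm0 : 0 ≤ m) :
    (1 / (β + γ)) ^ 3 * m ≤ aInt β γ p q := by
  have h1 := le_fRJ hβ hγ q
  have h2 := le_fRJ hβ hγ (resH p q)
  have h3 := le_fRJ hβ hγ (p + resH p q - q)
  have e : aInt β γ p q = (fRJ β γ (resH p q) * fRJ β γ q * fRJ β γ (p + resH p q - q)) *
      (tan ((q - p) / 4) ^ 2 * (sin (p / 2) * sin (q / 2)) * sin (q / 2) /
      sqrt (Fplus p q)) := by
    rw [← omega_mul_omega hp hq, ← ω_eq hq, aInt]; ring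
  rw [e]
  have h0 : 0 < 1 / (β + γ) := by positivity
  have : (1 / (β + γ)) ^ 3 = 1 / (β + γ) * (1 / (β + γ)) * (1 / (β + γ)) := by ring
  rw [this]
  have hpos := fRJ_pos hβ hγ
  have := hpos q
  have := hpos (resH p q)
  have := hpos (p + resH p q - q)
  apply mul_le_mul _ hm hm0 (by positivity)
  apply mul_le_mul _ h3 h0.le (by positivity)
  apply mul_le_mul h2 h1 h0.le (by positivity)

lemma integral_ge {f : ℝ → ℝ} (hf : ∀ x, 0 ≤ f x) {a b c d m : ℝ} (hi : IntervalIntegrable f volume a b)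
    (hac : a ≤ c) (hcd : c ≤ d) (hdb : d ≤ b) (hm : ∀ x ∈ Icc c d, m ≤ f x) :
    m * (d - c) ≤ ∫ x in a..b, f x := by
  have h1 : ∫ x in c..d, f x ≤ ∫ x in a..b, f x :=
    intervalIntegral.integral_mono_interval hac hcd hdb (Filter.Eventually.of_forall hf) hi
  have h2 : IntervalIntegrable f volume c d := by
    apply hi.mono_set
    rw [uIcc_of_le hcd, uIcc_of_le (by linarith)]
    exact Icc_subset_Icc hac hdb
  have h3 : ∫ x in c..d, m ≤ ∫ x in c..d, f x :=
    intervalIntegral.integral_mono_on hcd (by simp) h2 hm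
  simp only [intervalIntegral.integral_const, smul_eq_mul] at h3
  linarith

lemma aint_ge {β γ : ℝ} (hβ : 0 < β) (hγ : 0 < γ) {p r : ℝ} (hp : p ∈ Ioo (0:ℝ) (2 * π))
    (hr : 0 < r) (hr3 : r ^ 3 = sin (p / 2))
    (hi : IntervalIntegrable (aInt β γ p) volume 0 (2 * π)) :
    (1 / (β + γ)) ^ 3 * (r / 19200) * r ≤ ∫ q in (0:ℝ)..(2 * π), aInt β γ p q := by
  have hπ1 := pi_gt_three
  have hr1 : r ≤ 1 := by
    by_contra h
    push Not at h
    have : 1 < r ^ 3 := one_lt_pow₀ h (by norm_num)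
    linarith [sin_le_one (p / 2)]
  rcases le_or_gt p π with h | h
  · have := integral_ge (aInt_nonneg hβ hγ p) hi (c := 2 * π - 2 * r) (d := 2 * π - r)
      (m := (1 / (β + γ)) ^ 3 * (r / 19200)) (by linarith) (by linarith) (by linarith) ?_
    · convert this using 2; ring
    · intro q hq
      refine aInt_ge hβ hγ hp ⟨by linarith [hq.1], by linarith [hq.2]⟩ ?_ (by positivity)
      have := core_bound hp.1 h hr hr1 hr3 (t := 2 * π - q) (by linarith [hq.2]) (by linarith [hq.1])
      have e1 : (2 * π - (2 * π - q) - p) / 4 = (q - p) / 4 := by ring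
      have e2 : (2 * π - q) / 2 = π - q / 2 := by ring
      rw [e1, e2, sin_pi_sub, cos_pi_sub, sub_neg_eq_add] at this
      exact this
  · have := integral_ge (aInt_nonneg hβ hγ p) hi (c := r) (d := 2 * r)
      (m := (1 / (β + γ)) ^ 3 * (r / 19200)) (by linarith) (by linarith) (by linarith) ?_
    · convert this using 2; ring
    · intro q hq
      refine aInt_ge hβ hγ hp ⟨by linarith [hq.1], by linarith [hq.2]⟩ ?_ (by positivity)
      have e2 : (2 * π - p) / 2 = π - p / 2 := by ring
      have := core_bound (p := 2 * π - p) (by linarith [hp.2]) (by linarith) hr hr1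
        (by rw [e2, sin_pi_sub, hr3]) (t := q) (by linarith [hq.1]) (by linarith [hq.2])
      have e1 : (2 * π - q - (2 * π - p)) / 4 = -((q - p) / 4) := by ring
      have e3 : (-cos (p / 2) - cos (q / 2)) ^ 2 = (cos (p / 2) + cos (q / 2)) ^ 2 := by ring
      rw [e1, e2, sin_pi_sub, cos_pi_sub, e3, tan_neg, neg_sq] at this
      exact this

lemma afreq_nonneg {β γ : ℝ} (hβ : 0 < β) (hγ : 0 < γ) (p : ℝ) : 0 ≤ afreq β γ p := by
  have h1 := ω_nonneg p
  have h2 := fRJ_pos hβ hγ p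
  have h3 : 0 ≤ ∫ q in (0:ℝ)..(2 * π), aInt β γ p q :=
    intervalIntegral.integral_nonneg (by positivity) fun q _ => aInt_nonneg hβ hγ p q
  change 0 ≤ ω p / fRJ β γ p * ∫ q in (0:ℝ)..(2 * π), aInt β γ p q
  positivity

lemma afreq_ge {β γ : ℝ} (hβ : 0 < β) (hγ : 0 < γ) : ∃ c > 0, ∀ p ∈ Ioo (0:ℝ) (2 * π),
    ∀ r > 0, r ^ 3 = sin (p / 2) → afreq β γ p = 0 ∨ c * r ^ 5 ≤ afreq β γ p := by
  refine ⟨γ * ((1 / (β + γ)) ^ 3 / 19200), by positivity, ?_⟩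
  intro p hp r hr hr3
  by_cases hi : IntervalIntegrable (aInt β γ p) volume 0 (2 * π)
  · right
    have h := aint_ge hβ hγ hp hr hr3 hi
    have e : afreq β γ p = ω p / fRJ β γ p * ∫ q in (0:ℝ)..(2 * π), aInt β γ p q := rfl
    have h2 : r ^ 3 * γ ≤ ω p / fRJ β γ p := by
      rw [ω_eq hp, hr3, fRJ, div_div_eq_mul_div, div_one]
      have := sin_half_pos hp
      have := ω_nonneg p
      gcongr
      nlinarith
    rw [e]
    calc _ = (r ^ 3 * γ) * ((1 / (β + γ)) ^ 3 * (r / 19200) * r) := by ring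
      _ ≤ _ := mul_le_mul h2 h (by positivity) ((by positivity : 0 ≤ r ^ 3 * γ).trans h2)
  · left
    have e : afreq β γ p = ω p / fRJ β γ p * ∫ q in (0:ℝ)..(2 * π), aInt β γ p q := rfl
    rw [e, intervalIntegral.integral_undef hi, mul_zero]

lemma weight_bound {β γ : ℝ} (hβ : 0 < β) (hγ : 0 < γ) : ∃ C > 0, ∀ p ∈ Ioo (0:ℝ) (2 * π),
    afreq β γ p ^ (-(1:ℝ)/2) * sqrt (sin (p / 2)) ≤ C * sin (p / 2) ^ (-(1:ℝ)/3) := by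
  obtain ⟨c, hc, H⟩ := afreq_ge hβ hγ
  refine ⟨1 / sqrt c, by positivity, ?_⟩
  intro p hp
  have hs := sin_half_pos hp
  obtain ⟨r, hrdef⟩ : ∃ r, r = sin (p / 2) ^ ((1:ℝ)/3) := ⟨_, rfl⟩
  have hr : 0 < r := by rw [hrdef]; positivity
  have hr3 : r ^ 3 = sin (p / 2) := by
    rw [hrdef, ← rpow_natCast, ← rpow_mul hs.le]; norm_num
  have e1 : sin (p / 2) ^ (-(1:ℝ)/3) = r⁻¹ := by
    rw [neg_div, rpow_neg hs.le, hrdef]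
  rw [e1]
  rcases H p hp r hr hr3 with h | h
  · rw [h, zero_rpow (by norm_num), zero_mul]; positivity
  · have ha : 0 < afreq β γ p := lt_of_lt_of_le (by positivity) h
    rw [neg_div, rpow_neg ha.le, ← sqrt_eq_rpow, ← hr3]
    have h5 : sqrt (c * r ^ 5) = sqrt c * (r * sqrt (r ^ 3)) := by
      rw [sqrt_mul hc.le]
      congr 1
      rw [show r ^ 5 = r ^ 2 * r ^ 3 by ring, sqrt_mul (by positivity), sqrt_sq hr.le]
    have h6 := sqrt_le_sqrt h
    rw [h5] at h6
    have h7 : 0 < sqrt (r ^ 3) := sqrt_pos.2 (by positivity)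
    have h8 : 0 < sqrt c := sqrt_pos.2 hc
    calc _ ≤ (sqrt c * (r * sqrt (r ^ 3)))⁻¹ * sqrt (r ^ 3) := by gcongr
      _ = _ := by field_simp

lemma K2_bound {β γ : ℝ} (hβ : 0 < β) (hγ : 0 < γ) {p q : ℝ} (hp : p ∈ Ioo (0:ℝ) (2 * π))
    (hq : q ∈ Ioo (0:ℝ) (2 * π)) :
    |K2 β γ p q| ≤ (1 / γ) ^ 2 * (sqrt (sin (p / 2)) * sqrt (sin (q / 2))) := by
  have hsp := sin_half_pos hp
  have hsq := sin_half_pos hq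
  have h2 := fRJ_pos hβ hγ (resH p q)
  have h3 := fRJ_pos hβ hγ (p + resH p q - q)
  have h2' := fRJ_le hβ hγ (resH p q)
  have h3' := fRJ_le hβ hγ (p + resH p q - q)
  have h5 := ω_nonneg (resH p q)
  have h6 := ω_nonneg (p + resH p q - q)
  have h5' := ω_le_one (resH p q)
  have h6' := ω_le_one (p + resH p q - q)
  obtain ⟨a, ha⟩ : ∃ a, a = sqrt (sin (p / 2)) := ⟨_, rfl⟩
  obtain ⟨b, hb⟩ : ∃ b, b = sqrt (sin (q / 2)) := ⟨_, rfl⟩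
  have ha0 : 0 < a := by rw [ha]; exact sqrt_pos.2 hsp
  have hb0 : 0 < b := by rw [hb]; exact sqrt_pos.2 hsq
  have ha2 : sin (p / 2) = a ^ 2 := by rw [ha, sq_sqrt hsp.le]
  have hb2 : sin (q / 2) = b ^ 2 := by rw [hb, sq_sqrt hsq.le]
  have hF : a * b ≤ sqrt (Fplus p q) := by
    apply le_sqrt_of_sq_le
    unfold Fplus
    rw [ha2, hb2]
    nlinarith [sq_nonneg (cos (p / 2) + cos (q / 2)), mul_pos (pow_pos ha0 2) (pow_pos hb0 2)]
  rw [← ha, ← hb, K2, ω_eq hp, ω_eq hq, ha2, hb2]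
  rw [abs_of_nonneg (by positivity), div_le_iff₀ (lt_of_lt_of_le (by positivity) hF)]
  calc _ = (a ^ 2 * b ^ 2) * (ω (resH p q) * ω (p + resH p q - q)) *
          (fRJ β γ (resH p q) * fRJ β γ (p + resH p q - q)) := by ring
    _ ≤ (a ^ 2 * b ^ 2) * (1 * 1) * (1 / γ * (1 / γ)) := by gcongr
    _ = (1 / γ) ^ 2 * (a * b) * (a * b) := by ring
    _ ≤ _ := by gcongr

lemma kernel_bound {β γ : ℝ} (hβ : 0 < β) (hγ : 0 < γ) :
    ∃ Cb : ℝ, ∀ p ∈ Set.Ioo (0:ℝ) (2 * π), ∀ q ∈ Set.Ioo (0:ℝ) (2 * π),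
      |afreq β γ p ^ (-(1:ℝ)/2) * K2 β γ p q * afreq β γ q ^ (-(1:ℝ)/2)| ≤
        Cb * Real.sin (p / 2) ^ (-(1:ℝ)/3) * Real.sin (q / 2) ^ (-(1:ℝ)/3) := by
  obtain ⟨C, hC, H⟩ := weight_bound hβ hγ
  refine ⟨(1 / γ) ^ 2 * C * C, ?_⟩
  intro p hp q hq
  have hsp := sin_half_pos hp
  have hsq := sin_half_pos hq
  have h1 := K2_bound hβ hγ hp hq
  have ap := rpow_nonneg (afreq_nonneg hβ hγ p) (-(1:ℝ)/2)
  have aq := rpow_nonneg (afreq_nonneg hβ hγ q) (-(1:ℝ)/2)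
  rw [abs_mul, abs_mul, abs_of_nonneg ap, abs_of_nonneg aq]
  calc _ ≤ afreq β γ p ^ (-(1:ℝ)/2) * ((1 / γ) ^ 2 * (sqrt (sin (p / 2)) * sqrt (sin (q / 2)))) *
          afreq β γ q ^ (-(1:ℝ)/2) := by gcongr
    _ = (1 / γ) ^ 2 * ((afreq β γ p ^ (-(1:ℝ)/2) * sqrt (sin (p / 2))) *
          (afreq β γ q ^ (-(1:ℝ)/2) * sqrt (sin (q / 2)))) := by ring
    _ ≤ (1 / γ) ^ 2 * ((C * sin (p / 2) ^ (-(1:ℝ)/3)) * (C * sin (q / 2) ^ (-(1:ℝ)/3))) := by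
        have := H p hp
        have := H q hq
        gcongr
    _ = _ := by ring

@[fun_prop]
lemma meas_ω : Measurable ω := by unfold ω; fun_prop

lemma meas_resH : Measurable (fun z : ℝ × ℝ => resH z.1 z.2) := by
  unfold resH
  have h1 : Measurable (fun z : ℝ × ℝ => tan (|z.2 - z.1| / 4)) := by
    simp only [tan_eq_sin_div_cos]
    fun_prop
  have h2 : Measurable (fun z : ℝ × ℝ => tan (|z.2 - z.1| / 4) * cos ((z.1 + z.2) / 4)) := by
    fun_prop
  have h3 := measurable_arcsin.comp h2
  exact ((measurable_snd.sub measurable_fst).div_const 2).add (h3.const_mul 2)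

@[fun_prop]
lemma meas_fRJ (β γ : ℝ) : Measurable (fRJ β γ) := by unfold fRJ; fun_prop

lemma meas_Fplus : Measurable (fun z : ℝ × ℝ => Fplus z.1 z.2) := by unfold Fplus; fun_prop

lemma meas_aInt (β γ : ℝ) : Measurable (fun z : ℝ × ℝ => aInt β γ z.1 z.2) := by
  have h1 := meas_resH
  have h2 := meas_Fplus
  unfold aInt
  fun_prop

lemma meas_K2 (β γ : ℝ) : Measurable (fun z : ℝ × ℝ => K2 β γ z.1 z.2) := by
  have h1 := meas_resH
  have h2 := meas_Fplus
  unfold K2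
  fun_prop

lemma meas_afreq (β γ : ℝ) : Measurable (afreq β γ) := by
  have h : Measurable fun p => ∫ q in (0:ℝ)..(2 * π), aInt β γ p q := by
    simp only [intervalIntegral.integral_of_le two_pi_pos.le]
    exact ((meas_aInt β γ).stronglyMeasurable.integral_prod_right'
      (ν := volume.restrict (Ioc 0 (2 * π)))).measurable
  have e : afreq β γ = fun p => ω p / fRJ β γ p * ∫ q in (0:ℝ)..(2 * π), aInt β γ p q := rfl
  rw [e]
  fun_prop

instance : IsFiniteMeasure μ2π := by unfold μ2π; infer_instance

lemma integrable_phi : Integrable (fun p : ℝ => (sin (p / 2) ^ (-(1:ℝ)/3)) ^ 2) μ2π := by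
  have i1 : IntervalIntegrable (fun x : ℝ => x ^ (-(2:ℝ)/3)) volume 0 (2 * π) :=
    intervalIntegral.intervalIntegrable_rpow' (by norm_num)
  have i2 := (i1.comp_sub_left (2 * π)).symm
  simp only [sub_zero, sub_self] at i2
  have i3 := (i1.add i2).const_mul (π ^ ((2:ℝ)/3))
  rw [intervalIntegrable_iff_integrableOn_Ioo_of_le two_pi_pos.le] at i3
  refine Integrable.mono' i3 ?_ ?_
  · apply Measurable.aestronglyMeasurable; fun_prop
  · refine (ae_restrict_mem measurableSet_Ioo).mono ?_
    intro p hp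
    have hs := sin_half_pos hp
    have h2 : 0 < 2 * π - p := by linarith [hp.2]
    have hp1 := hp.1
    rw [norm_of_nonneg (by positivity), ← rpow_natCast, ← rpow_mul hs.le]
    have key : ∀ x : ℝ, 0 < x → x ≤ π → sin (x / 2) ^ (-(2:ℝ)/3) ≤ π ^ ((2:ℝ)/3) * x ^ (-(2:ℝ)/3) := by
      intro x hx hxπ
      have h := mul_le_sin (x := x / 2) (by linarith) (by linarith)
      have e : 2 / π * (x / 2) = x / π := by ring
      rw [e] at h
      calc _ ≤ (x / π) ^ (-(2:ℝ)/3) := rpow_le_rpow_of_nonpos (by positivity) h (by norm_num)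
        _ = _ := by
          rw [div_rpow hx.le pi_pos.le, neg_div, rpow_neg pi_pos.le, div_inv_eq_mul, mul_comm]
    have e : (-(1:ℝ)/3 * ((2:ℕ):ℝ)) = -(2:ℝ)/3 := by norm_num
    rw [e]
    have n1 : 0 ≤ p ^ (-(2:ℝ)/3) := by positivity
    have n2 : 0 ≤ (2 * π - p) ^ (-(2:ℝ)/3) := by positivity
    have n3 : 0 ≤ π ^ ((2:ℝ)/3) := by positivity
    rcases le_or_gt p π with h | h
    · refine (key p hp1 h).trans ?_
      gcongr
      linarith
    · have := key (2 * π - p) h2 (by linarith)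
      rw [show (2 * π - p) / 2 = π - p / 2 by ring, sin_pi_sub] at this
      refine this.trans ?_
      gcongr
      linarith

lemma memLp_kernel {β γ : ℝ} (hβ : 0 < β) (hγ : 0 < γ) :
    MemLp (fun z : ℝ × ℝ => afreq β γ z.1 ^ (-(1:ℝ)/2) * K2 β γ z.1 z.2 * afreq β γ z.2 ^ (-(1:ℝ)/2))
      2 (μ2π.prod μ2π) := by
  obtain ⟨C, hC⟩ := kernel_bound hβ hγ
  have hb : MemLp (fun z : ℝ × ℝ => C * (Real.sin (z.1 / 2) ^ (-(1:ℝ)/3) *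
      Real.sin (z.2 / 2) ^ (-(1:ℝ)/3))) 2 (μ2π.prod μ2π) := by
    apply MemLp.const_mul
    rw [memLp_two_iff_integrable_sq]
    · simp only [mul_pow]
      exact integrable_phi.mul_prod integrable_phi
    · apply Measurable.aestronglyMeasurable; fun_prop
  refine hb.mono' ?_ ?_
  · have h1 := meas_afreq β γ
    have h2 := meas_K2 β γ
    apply Measurable.aestronglyMeasurable
    fun_prop
  · have : ∀ᵐ z ∂(μ2π.prod μ2π), z ∈ Ioo (0:ℝ) (2 * π) ×ˢ Ioo (0:ℝ) (2 * π) := by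
      unfold μ2π
      rw [Measure.prod_restrict]
      exact ae_restrict_mem (measurableSet_Ioo.prod measurableSet_Ioo)
    filter_upwards [this] with z hz
    rw [norm_eq_abs, ← mul_assoc]
    exact hC z.1 hz.1 z.2 hz.2

/-- **Compactness of the weighted `K₂` operator:** for `β, γ > 0`, the integral operator
on `L²(0,2π)` with kernel `a(p)^{−1/2} K₂(p,q) a(q)^{−1/2}` is a well-defined bounded
linear operator which is compact; indeed its kernel is bounded by a constant times
`sin(p/2)^{−1/3} sin(q/2)^{−1/3}`, so it is Hilbert–Schmidt. -/
theorem stmt9 (β γ : ℝ) (hβ : 0 < β) (hγ : 0 < γ) :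
    (∃ T : Lp ℝ 2 μ2π →L[ℝ] Lp ℝ 2 μ2π,
      (∀ g : Lp ℝ 2 μ2π,
        (T g : ℝ → ℝ) =ᵐ[μ2π] fun p => ∫ q in Set.Ioo (0:ℝ) (2 * π),
          afreq β γ p ^ (-(1:ℝ)/2) * K2 β γ p q * afreq β γ q ^ (-(1:ℝ)/2) * g q) ∧
      IsCompactOperator T) ∧
    (∃ Cb : ℝ, ∀ p ∈ Set.Ioo (0:ℝ) (2 * π), ∀ q ∈ Set.Ioo (0:ℝ) (2 * π),
      |afreq β γ p ^ (-(1:ℝ)/2) * K2 β γ p q * afreq β γ q ^ (-(1:ℝ)/2)| ≤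
        Cb * Real.sin (p / 2) ^ (-(1:ℝ)/3) * Real.sin (q / 2) ^ (-(1:ℝ)/3)) := by
  refine ⟨?_, kernel_bound hβ hγ⟩
  obtain ⟨-, T, hT, hc⟩ := compKer_of_memLp (memLp_kernel hβ hγ)
  exact ⟨T, hT, hc⟩
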